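/- arXiv:2002.00598 — 9 statements merged into one kernel-verified Lean document; each statement's English description precedes it below -/
import Mathlib

section
/- For every real number μ > 1, setting γ = (1+√μ)/(μ−1), there exists a unique x > 0 such that F(γ, x) = 2. (Equivalently, for every charge μ > 1 the moduli space M(μ) = F_{γ(μ)}^{-1}(2) of simple regularized unparametrized frozen-planet orbits with mean electron interaction consists of exactly one point.) -/
open Real intervalIntegral

/-- `σ⁺(γ,x) = 2 − γ²x + √((2−γ²x)² + 4(γ+1)²)`. -/
noncomputable def sigmaPlus (γ x : ℝ) : ℝ :=
  2 - γ ^ 2 * x + Real.sqrt ((2 - γ ^ 2 * x) ^ 2 + 4 * (γ + 1) ^ 2)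

/-- `σ⁻(γ,x) = 2 − γ²x − √((2−γ²x)² + 4(γ+1)²)`. -/
noncomputable def sigmaMinus (γ x : ℝ) : ℝ :=
  2 - γ ^ 2 * x - Real.sqrt ((2 - γ ^ 2 * x) ^ 2 + 4 * (γ + 1) ^ 2)

/-- `F(γ,x) = σ⁺(γ,x) · (∫₀¹ r^{3/2}/√((1−r)(σ⁺ r − σ⁻)) dr) /
    (∫₀¹ r^{1/2}/√((1−r)(σ⁺ r − σ⁻)) dr)`. -/
noncomputable def F (γ x : ℝ) : ℝ :=
  sigmaPlus γ x *
    (∫ r in (0:ℝ)..1, r ^ ((3:ℝ)/2) /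
      Real.sqrt ((1 - r) * (sigmaPlus γ x * r - sigmaMinus γ x))) /
    (∫ r in (0:ℝ)..1, r ^ ((1:ℝ)/2) /
      Real.sqrt ((1 - r) * (sigmaPlus γ x * r - sigmaMinus γ x)))

/-- The lemniscatic constant `ϖ = 2∫₀¹ dt/√(1−t⁴)`. -/
noncomputable def varpi : ℝ := 2 * ∫ t in (0:ℝ)..1, 1 / Real.sqrt (1 - t ^ 4)

noncomputable def kf (b p s r : ℝ) : ℝ :=
  r ^ p * (Real.sqrt (1 - r))⁻¹ * (Real.sqrt (s ^ 2 * r + b ^ 2))⁻¹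

noncomputable def kJ (b p s : ℝ) : ℝ := ∫ r in (0:ℝ)..1, kf b p s r

lemma kD : IntervalIntegrable (fun r : ℝ => (Real.sqrt (1 - r))⁻¹) MeasureTheory.volume 0 1 := by
  have h : IntervalIntegrable (fun r : ℝ => r ^ (-(1/2) : ℝ)) MeasureTheory.volume 0 1 :=
    intervalIntegral.intervalIntegrable_rpow' (by norm_num)
  have h2 := (h.comp_sub_left 1).symm
  simp only [sub_zero, sub_self] at h2
  refine h2.congr_ae ?_
  refine (MeasureTheory.ae_restrict_mem measurableSet_uIoc).mono ?_
  intro r hr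
  rw [Set.uIoc_of_le zero_le_one] at hr
  have : 0 ≤ 1 - r := by linarith [hr.2]
  simp only
  rw [Real.rpow_neg this, ← Real.sqrt_eq_rpow]

lemma kbound (b p s r : ℝ) (hb : 0 < b) (hp : 0 ≤ p) (h0 : 0 ≤ r) (h1 : r ≤ 1) :
    ‖kf b p s r‖ ≤ (Real.sqrt (1 - r))⁻¹ * b⁻¹ := by
  have e1 : r ^ p ≤ 1 := Real.rpow_le_one h0 h1 hp
  have e0 : 0 ≤ r ^ p := Real.rpow_nonneg h0 p
  have e2 : b ≤ Real.sqrt (s ^ 2 * r + b ^ 2) := Real.le_sqrt_of_sq_le (by nlinarith [mul_nonneg (sq_nonneg s) h0])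
  have e3 : (Real.sqrt (s ^ 2 * r + b ^ 2))⁻¹ ≤ b⁻¹ := inv_anti₀ hb e2
  have e4 : 0 ≤ (Real.sqrt (1 - r))⁻¹ := by positivity
  rw [Real.norm_of_nonneg (by unfold kf; positivity)]
  unfold kf
  have : r ^ p * (Real.sqrt (1 - r))⁻¹ ≤ 1 * (Real.sqrt (1 - r))⁻¹ := by gcongr
  rw [one_mul] at this
  gcongr

lemma kmeas (b p s : ℝ) : Measurable (kf b p s) := by
  unfold kf
  fun_prop

lemma kint (b p s : ℝ) (hb : 0 < b) (hp : 0 ≤ p) :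
    IntervalIntegrable (kf b p s) MeasureTheory.volume 0 1 := by
  refine (kD.mul_const b⁻¹).mono_fun' (kmeas b p s).aestronglyMeasurable ?_
  refine (MeasureTheory.ae_restrict_mem measurableSet_uIoc).mono ?_
  intro r hr
  rw [Set.uIoc_of_le zero_le_one] at hr
  exact kbound b p s r hb hp hr.1.le hr.2

lemma kcont (b p : ℝ) (hb : 0 < b) (hp : 0 ≤ p) : Continuous (kJ b p) := by
  unfold kJ
  refine intervalIntegral.continuous_of_dominated_interval
    (bound := fun r => (Real.sqrt (1 - r))⁻¹ * b⁻¹) ?_ ?_ (kD.mul_const b⁻¹) ?_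
  · intro s; exact (kmeas b p s).aestronglyMeasurable
  · intro s
    refine Filter.Eventually.of_forall ?_
    intro r hr
    rw [Set.uIoc_of_le zero_le_one] at hr
    exact kbound b p s r hb hp hr.1.le hr.2
  · refine Filter.Eventually.of_forall ?_
    intro r hr
    rw [Set.uIoc_of_le zero_le_one] at hr
    unfold kf
    refine Continuous.mul continuous_const (Continuous.inv₀ (by fun_prop) ?_)
    intro s
    have := hr.1
    positivity

lemma kpos (b p s : ℝ) (hb : 0 < b) (hp : 0 ≤ p) : 0 < kJ b p s := by
  refine intervalIntegral.intervalIntegral_pos_of_pos_on (kint b p s hb hp) ?_ one_pos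
  intro r hr
  have h0 := hr.1
  have h1 : 0 < 1 - r := by linarith [hr.2]
  unfold kf
  positivity

lemma kanti (b p s t : ℝ) (hb : 0 < b) (hp : 0 ≤ p) (hs : 0 < s) (hst : s < t) :
    kJ b p t < kJ b p s := by
  have : 0 < ∫ r in (0:ℝ)..1, (kf b p s r - kf b p t r) := by
    refine intervalIntegral.intervalIntegral_pos_of_pos_on
      ((kint b p s hb hp).sub (kint b p t hb hp)) ?_ one_pos
    intro r hr
    have h0 := hr.1
    have h1 : 0 < 1 - r := by linarith [hr.2]
    unfold kf
    rw [← mul_sub]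
    refine mul_pos (by positivity) (sub_pos.2 (inv_strictAnti₀ (by positivity) ?_))
    apply Real.sqrt_lt_sqrt (by positivity)
    gcongr
  rw [intervalIntegral.integral_sub (kint b p s hb hp) (kint b p t hb hp)] at this
  unfold kJ; linarith

lemma kmono (b p s t : ℝ) (hb : 0 < b) (hp : 0 ≤ p) (hs : 0 < s) (hst : s < t) :
    s * kJ b p s ≤ t * kJ b p t := by
  unfold kJ
  rw [← intervalIntegral.integral_const_mul, ← intervalIntegral.integral_const_mul]
  refine intervalIntegral.integral_mono_on zero_le_one ((kint b p s hb hp).const_mul s)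
    ((kint b p t hb hp).const_mul t) ?_
  intro r hr
  have h0 := hr.1
  have ht : 0 < t := hs.trans hst
  unfold kf
  have key : s * (Real.sqrt (s ^ 2 * r + b ^ 2))⁻¹ ≤ t * (Real.sqrt (t ^ 2 * r + b ^ 2))⁻¹ := by
    rw [← div_eq_mul_inv, ← div_eq_mul_inv, div_le_div_iff₀ (by positivity) (by positivity)]
    rw [← Real.sqrt_sq hs.le, ← Real.sqrt_sq ht.le, ← Real.sqrt_mul (sq_nonneg _),
      ← Real.sqrt_mul (sq_nonneg _)]
    rw [Real.sqrt_sq hs.le, Real.sqrt_sq ht.le]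
    apply Real.sqrt_le_sqrt
    have : s ^ 2 ≤ t ^ 2 := by gcongr
    nlinarith [mul_le_mul_of_nonneg_right this (sq_nonneg b)]
  have h : 0 ≤ r ^ p * (Real.sqrt (1 - r))⁻¹ := by positivity
  have := mul_le_mul_of_nonneg_left key h
  linarith

noncomputable def kG (b s : ℝ) : ℝ := s * kJ b (3/2) s / kJ b (1/2) s

lemma kG_strict (b s t : ℝ) (hb : 0 < b) (hs : 0 < s) (hst : s < t) : kG b s < kG b t := by
  unfold kG
  have h1 := kmono b (3/2) s t hb (by norm_num) hs hst
  have h2 := kanti b (1/2) s t hb (by norm_num) hs hst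
  have h3 := kpos b (1/2) t hb (by norm_num)
  have h4 := kpos b (3/2) s hb (by norm_num)
  exact div_lt_div₀' h1 h2 (by have := mul_pos hs h4; linarith) h3

lemma kG_cont (b : ℝ) (hb : 0 < b) : Continuous (kG b) := by
  unfold kG
  exact (continuous_id.mul (kcont b _ hb (by norm_num))).div (kcont b _ hb (by norm_num))
    (fun s => (kpos b _ s hb (by norm_num)).ne')

lemma khalf (b s : ℝ) (hb : 0 < b) (hs : 0 < s) : kJ b (1/2) s ≤ 2 * kJ b (3/2) s := by
  have i3 := kint b (3/2) s hb (by norm_num)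
  have i1 := kint b (1/2) s hb (by norm_num)
  set h : ℝ → ℝ := fun r => Real.sqrt (r / (s ^ 2 * r + b ^ 2)) * (Real.sqrt (1 - r))⁻¹ with hh
  have : ∫ r in (0:ℝ)..1, (r - 1/2) * h (1/2) ≤ ∫ r in (0:ℝ)..1, (kf b (3/2) s r - 1/2 * kf b (1/2) s r) := by
    refine intervalIntegral.integral_mono_on_of_le_Ioo zero_le_one
      (Continuous.intervalIntegrable (by fun_prop) _ _) (i3.sub (i1.const_mul _)) ?_
    intro r hr
    have h0 := hr.1
    have h1 : 0 < 1 - r := by linarith [hr.2]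
    have e : kf b (3/2) s r - 1/2 * kf b (1/2) s r = (r - 1/2) * h r := by
      have : r ^ (3/2 : ℝ) = r * r ^ (1/2 : ℝ) := by
        rw [← Real.rpow_one_add' h0.le (by norm_num)]; norm_num
      simp only [kf, hh]
      rw [this, ← Real.sqrt_eq_rpow, Real.sqrt_div h0.le]
      ring
    rw [e]
    have mono : ∀ u v : ℝ, 0 < u → u ≤ v → v < 1 → h u ≤ h v := by
      intro u v hu huv hv
      have hv0 : 0 < v := by linarith
      have : 0 < 1 - v := by linarith
      simp only [hh]
      refine mul_le_mul ?_ ?_ (by positivity) (by positivity)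
      · apply Real.sqrt_le_sqrt
        rw [div_le_div_iff₀ (by positivity) (by positivity)]
        nlinarith [mul_le_mul_of_nonneg_right huv (sq_nonneg b)]
      · apply inv_anti₀ (by positivity)
        apply Real.sqrt_le_sqrt
        linarith
    rcases le_total r (1/2) with hr2 | hr2
    · have := mono r (1/2) h0 hr2 (by norm_num)
      nlinarith
    · have := mono (1/2) r (by norm_num) hr2 hr.2
      nlinarith
  rw [intervalIntegral.integral_sub i3 (i1.const_mul _), intervalIntegral.integral_const_mul,
    intervalIntegral.integral_mul_const] at this
  have z : ∫ r in (0:ℝ)..1, (r - 1/2) = 0 := by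
    rw [intervalIntegral.integral_sub (by simp) (by simp)]
    simp
  rw [z] at this
  unfold kJ
  linarith

lemma ksp (γ x : ℝ) (hγ : 0 < γ) : 0 < sigmaPlus γ x := by
  unfold sigmaPlus
  have : |2 - γ ^ 2 * x| < Real.sqrt ((2 - γ ^ 2 * x) ^ 2 + 4 * (γ + 1) ^ 2) := by
    rw [← Real.sqrt_sq_eq_abs]
    apply Real.sqrt_lt_sqrt (sq_nonneg _)
    have : 0 < (γ + 1) ^ 2 := by positivity
    linarith
  linarith [neg_abs_le (2 - γ ^ 2 * x)]

lemma ksm (γ x : ℝ) : sigmaPlus γ x * sigmaMinus γ x = - (2 * (γ + 1)) ^ 2 := by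
  unfold sigmaPlus sigmaMinus
  have := Real.sq_sqrt (show 0 ≤ (2 - γ ^ 2 * x) ^ 2 + 4 * (γ + 1) ^ 2 by positivity)
  nlinarith

lemma kFint (γ x p : ℝ) (hγ : 0 < γ) :
    (∫ r in (0:ℝ)..1, r ^ p / Real.sqrt ((1 - r) * (sigmaPlus γ x * r - sigmaMinus γ x)))
      = Real.sqrt (sigmaPlus γ x) * kJ (2 * (γ + 1)) p (sigmaPlus γ x) := by
  unfold kJ
  rw [← intervalIntegral.integral_const_mul]
  apply intervalIntegral.integral_congr
  intro r hr
  rw [Set.uIcc_of_le zero_le_one] at hr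
  have h1 : 0 ≤ 1 - r := by linarith [hr.2]
  have h0 := hr.1
  have hs := ksp γ x hγ
  have hm := ksm γ x
  set s := sigmaPlus γ x
  set m := sigmaMinus γ x
  have e : s * r - m = (s ^ 2 * r + (2 * (γ + 1)) ^ 2) / s := by
    rw [eq_div_iff hs.ne']; linarith
  simp only [kf]
  rw [e, Real.sqrt_mul h1, Real.sqrt_div (by positivity)]
  simp only [div_eq_mul_inv, mul_inv, inv_inv]
  ring

lemma kF (γ x : ℝ) (hγ : 0 < γ) : F γ x = kG (2 * (γ + 1)) (sigmaPlus γ x) := by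
  have hs := Real.sqrt_pos.2 (ksp γ x hγ)
  have h3 := kpos (2 * (γ + 1)) (1/2) (sigmaPlus γ x) (by positivity) (by norm_num)
  unfold F kG
  rw [kFint γ x _ hγ, kFint γ x _ hγ]
  field_simp

lemma kinj (γ x y : ℝ) (hγ : 0 < γ) (h : sigmaPlus γ x = sigmaPlus γ y) : x = y := by
  have h1 := ksm γ x
  have h2 := ksm γ y
  have hp := ksp γ x hγ
  rw [← h] at h2
  have h3 : sigmaMinus γ x = sigmaMinus γ y := mul_left_cancel₀ hp.ne' (h1.trans h2.symm)
  unfold sigmaPlus at h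
  unfold sigmaMinus at h3
  have : γ ^ 2 * x = γ ^ 2 * y := by linarith
  exact mul_left_cancel₀ (by positivity) this

lemma kmain (γ : ℝ) (hγ : 0 < γ) : ∃! x : ℝ, 0 < x ∧ F γ x = 2 := by
  have hb : 0 < 2 * (γ + 1) := by positivity
  have key : ∃ x : ℝ, 0 < x ∧ F γ x = 2 := by
    have h4 : 4 < sigmaPlus γ 0 := by
      unfold sigmaPlus
      have : 2 < Real.sqrt ((2 - γ ^ 2 * 0) ^ 2 + 4 * (γ + 1) ^ 2) := by
        apply Real.lt_sqrt_of_sq_lt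
        nlinarith
      linarith
    set s0 := sigmaPlus γ 0 with hs0
    have hG0 : kG (2 * (γ + 1)) 0 < 2 := by simp [kG]
    have hG1 : 2 < kG (2 * (γ + 1)) s0 := by
      have a := khalf (2 * (γ + 1)) s0 hb (by linarith)
      have p1 := kpos (2 * (γ + 1)) (1/2) s0 hb (by norm_num)
      unfold kG
      rw [lt_div_iff₀ p1]
      nlinarith
    obtain ⟨s, hs, hGs⟩ := intermediate_value_Ioo (show (0:ℝ) ≤ s0 by linarith)
      (kG_cont (2 * (γ + 1)) hb).continuousOn ⟨hG0, hG1⟩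
    have s1 := hs.1
    set b := 2 * (γ + 1) with hbd
    set a := (s ^ 2 - b ^ 2) / (2 * s) with ha
    have h2 : γ ^ 2 * ((2 - a) / γ ^ 2) = 2 - a := by field_simp
    have hsig : sigmaPlus γ ((2 - a) / γ ^ 2) = s := by
      unfold sigmaPlus
      rw [h2]
      have : (2 - (2 - a)) ^ 2 + 4 * (γ + 1) ^ 2 = ((s ^ 2 + b ^ 2) / (2 * s)) ^ 2 := by
        have : 4 * (γ + 1) ^ 2 = b ^ 2 := by rw [hbd]; ring
        rw [this, ha]
        field_simp
        ring
      rw [this, Real.sqrt_sq (by positivity), ha]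
      field_simp
      ring
    refine ⟨(2 - a) / γ ^ 2, ?_, ?_⟩
    · apply div_pos _ (by positivity)
      rw [sub_pos, ha, div_lt_iff₀ (by positivity)]
      have hq : s0 ^ 2 - b ^ 2 = 4 * s0 := by
        have := Real.sq_sqrt (show 0 ≤ (2 - γ ^ 2 * 0) ^ 2 + 4 * (γ + 1) ^ 2 by positivity)
        rw [hs0, hbd]
        unfold sigmaPlus
        nlinarith
      by_contra hc
      push Not at hc
      nlinarith [hs.2, sq_nonneg (s0 - s), mul_pos s1 (sub_pos.2 hs.2), sq_nonneg b, mul_pos hb hb]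
    · rw [kF γ _ hγ, hsig, hGs]
  obtain ⟨x, hx, hFx⟩ := key
  refine ⟨x, ⟨hx, hFx⟩, ?_⟩
  rintro y ⟨hy, hFy⟩
  apply kinj γ y x hγ
  rw [kF γ _ hγ] at hFx hFy
  rcases lt_trichotomy (sigmaPlus γ y) (sigmaPlus γ x) with h | h | h
  · have := kG_strict _ _ _ hb (ksp γ y hγ) h
    linarith
  · exact h
  · have := kG_strict _ _ _ hb (ksp γ x hγ) h
    linarith

/-- For every `μ > 1`, with `γ = (1+√μ)/(μ−1)`, there is a unique `x > 0` with
`F(γ,x) = 2`; i.e. the moduli space `M(μ)` consists of exactly one point. -/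
theorem statement_0 (μ : ℝ) (hμ : 1 < μ) :
    ∃! x : ℝ, 0 < x ∧ F ((1 + Real.sqrt μ) / (μ - 1)) x = 2 := by
  apply kmain
  have : 0 < μ - 1 := by linarith
  positivity
end

section
/- Let μ > 1, set γ = (1+√μ)/(μ−1), and let x > 0 be the unique solution of F(γ, x) = 2. Then σ⁺(γ,x)/2 ≥ γ + 1 (i.e., the maximal excursion q₁^max = σ⁺(γ,x)·x/2 of the inner electron reaches at least the position q̄₂ = (γ+1)x of the frozen outer electron, so the two orbits intersect) if and only if μ ≥ (3π/(3π − ϖ²))², where ϖ = 2∫₀¹ dt/√(1−t⁴) is the lemniscatic constant. -/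
open Real intervalIntegral

open MeasureTheory Set in
lemma aux_int_sub : IntervalIntegrable (fun r : ℝ => 1 / Real.sqrt (1 - r)) volume 0 1 := by
  have h := (intervalIntegral.intervalIntegrable_rpow' (a := 1) (b := 0) (r := -(1/2:ℝ))
    (by norm_num)).comp_sub_left 1
  norm_num at h
  refine h.congr ?_
  intro r hr
  rw [uIoc_of_le zero_le_one] at hr
  show (1 - r) ^ (-(1/2:ℝ)) = 1 / √(1 - r)
  rw [Real.rpow_neg (by linarith [hr.2]), ← Real.sqrt_eq_rpow, one_div]

noncomputable def ker (p A B r : ℝ) : ℝ := r ^ p / Real.sqrt ((1 - r) * (A * r + B))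

noncomputable def II (p A B : ℝ) : ℝ := ∫ r in (0:ℝ)..1, ker p A B r

open MeasureTheory Set in
lemma ker_int (p A B : ℝ) (hp : 0 ≤ p) (hA : 0 ≤ A) (hB : 0 < B) :
    IntervalIntegrable (ker p A B) volume 0 1 := by
  refine (aux_int_sub.const_mul (1 / Real.sqrt B)).mono_fun' ?_ ?_
  · apply Measurable.aestronglyMeasurable
    unfold ker
    fun_prop
  · refine (ae_restrict_iff' measurableSet_uIoc).2 (ae_of_all _ ?_)
    intro r hr
    rw [uIoc_of_le zero_le_one] at hr
    have h0 := hr.1.le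
    have h1 : 0 ≤ 1 - r := by linarith [hr.2]
    have hAr : 0 ≤ A * r := mul_nonneg hA h0
    show ‖r ^ p / √((1 - r) * (A * r + B))‖ ≤ 1 / √B * (1 / √(1 - r))
    rw [Real.sqrt_mul h1, Real.norm_of_nonneg (by positivity)]
    rcases h1.eq_or_lt with h1 | h1
    · rw [← h1]; simp
    have e : 1 / √B * (1 / √(1 - r)) = 1 / (√(1-r) * √B) := by
      rw [mul_comm (√(1-r)), one_div_mul_one_div]
    rw [e]
    have : r ^ p ≤ 1 := Real.rpow_le_one h0 hr.2 hp
    have h2 : √B ≤ √(A * r + B) := Real.sqrt_le_sqrt (by linarith)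
    have h3 : 0 < √B := Real.sqrt_pos.2 hB
    have h4 : 0 < √(1-r) := Real.sqrt_pos.2 h1
    gcongr

lemma II_pos (p A B : ℝ) (hp : 0 ≤ p) (hA : 0 ≤ A) (hB : 0 < B) : 0 < II p A B := by
  refine intervalIntegral.intervalIntegral_pos_of_pos_on (ker_int p A B hp hA hB) ?_ one_pos
  intro r hr
  have h0 := hr.1
  have h1 : 0 < 1 - r := by linarith [hr.2]
  unfold ker
  positivity

lemma lt_of_ioo (f g : ℝ → ℝ) (hf : IntervalIntegrable f MeasureTheory.volume 0 1)
    (hg : IntervalIntegrable g MeasureTheory.volume 0 1) (h : ∀ r ∈ Set.Ioo (0:ℝ) 1, f r < g r) :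
    ∫ r in (0:ℝ)..1, f r < ∫ r in (0:ℝ)..1, g r := by
  have := intervalIntegral.intervalIntegral_pos_of_pos_on (hg.sub hf)
    (fun r hr => sub_pos.2 (h r hr)) one_pos
  rw [intervalIntegral.integral_sub hg hf] at this
  linarith

lemma II_lt (p A B A' B' : ℝ) (hp : 0 ≤ p) (hA : 0 ≤ A) (hB : 0 < B) (hA' : A ≤ A') (hB' : B ≤ B')
    (h : A < A' ∨ B < B') : II p A' B' < II p A B := by
  refine lt_of_ioo _ _ (ker_int p A' B' hp (hA.trans hA') (hB.trans_le hB'))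
    (ker_int p A B hp hA hB) ?_
  intro r hr
  have h0 := hr.1
  have h1 : 0 < 1 - r := by linarith [hr.2]
  have h2 : A * r + B < A' * r + B' := by
    rcases h with h | h
    · nlinarith
    · nlinarith
  unfold ker
  gcongr

lemma II_scale (p A B l : ℝ) (hl : 0 < l) : II p (l * A) (l * B) = II p A B / √l := by
  unfold II
  rw [← intervalIntegral.integral_div]
  congr 1
  ext r
  unfold ker
  rw [show (1 - r) * (l * A * r + l * B) = l * ((1 - r) * (A * r + B)) by ring,
    Real.sqrt_mul hl.le, div_div, mul_comm]

open MeasureTheory Set in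
lemma subst_pow (n : ℕ) (g : ℝ → ℝ) :
    ∫ r in (0:ℝ)..1, g r = ∫ t in (0:ℝ)..1, ((n+1:ℕ) : ℝ) * t ^ n * g (t ^ (n+1)) := by
  rw [intervalIntegral.integral_of_le zero_le_one, intervalIntegral.integral_of_le zero_le_one,
    integral_Ioc_eq_integral_Ioo, integral_Ioc_eq_integral_Ioo]
  have him : (fun t : ℝ => t ^ (n+1)) '' Ioo 0 1 = Ioo 0 1 := by
    ext y
    constructor
    · rintro ⟨t, ht, rfl⟩
      exact ⟨pow_pos ht.1 _, pow_lt_one₀ ht.1.le ht.2 (by simp)⟩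
    · intro hy
      refine ⟨y ^ ((1:ℝ)/((n+1:ℕ):ℝ)), ⟨Real.rpow_pos_of_pos hy.1 _,
        Real.rpow_lt_one hy.1.le hy.2 (by positivity)⟩, ?_⟩
      show (y ^ ((1:ℝ)/((n+1:ℕ):ℝ))) ^ (n+1) = y
      rw [one_div]
      exact Real.rpow_inv_natCast_pow hy.1.le (by simp)
  have := integral_image_eq_integral_abs_deriv_smul (s := Ioo (0:ℝ) 1)
    (f := fun t : ℝ => t ^ (n+1)) (f' := fun t => ((n+1:ℕ):ℝ) * t ^ n) measurableSet_Ioo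
    (fun t _ => by simpa using (hasDerivAt_pow (n+1) t).hasDerivWithinAt)
    (fun a ha b hb hab => (pow_left_inj₀ ha.1.le hb.1.le (by simp)).1 hab) g
  rw [him] at this
  rw [this]
  refine setIntegral_congr_fun measurableSet_Ioo ?_
  intro t ht
  have := ht.1
  show |_| • _ = _
  rw [abs_of_nonneg (by positivity), smul_eq_mul]

noncomputable def LL (k : ℕ) : ℝ := ∫ t in (0:ℝ)..1, t ^ k / Real.sqrt (1 - t ^ 4)

open MeasureTheory Set in
lemma LL_int (k : ℕ) :
    IntervalIntegrable (fun t : ℝ => t ^ k / Real.sqrt (1 - t ^ 4)) volume 0 1 := by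
  refine aux_int_sub.mono_fun' ?_ ?_
  · apply Measurable.aestronglyMeasurable
    fun_prop
  · refine (ae_restrict_iff' measurableSet_uIoc).2 (ae_of_all _ ?_)
    intro r hr
    rw [uIoc_of_le zero_le_one] at hr
    have h0 := hr.1.le
    show ‖r ^ k / √(1 - r ^ 4)‖ ≤ 1 / √(1 - r)
    rw [Real.norm_of_nonneg (by positivity)]
    rcases hr.2.eq_or_lt with h1 | h1
    · rw [h1]; simp
    have : r ^ k ≤ 1 := pow_le_one₀ h0 hr.2
    have h2 : r ^ 4 ≤ r := by
      have := pow_le_pow_of_le_one h0 hr.2 (show 1 ≤ 4 by norm_num)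
      simpa using this
    have h4 : 0 < √(1-r) := Real.sqrt_pos.2 (by linarith)
    gcongr

lemma integral_congr_ioo (f g : ℝ → ℝ) (h : ∀ r ∈ Set.Ioo (0:ℝ) 1, f r = g r) :
    ∫ r in (0:ℝ)..1, f r = ∫ r in (0:ℝ)..1, g r := by
  rw [intervalIntegral.integral_of_le zero_le_one, intervalIntegral.integral_of_le zero_le_one,
    MeasureTheory.integral_Ioc_eq_integral_Ioo, MeasureTheory.integral_Ioc_eq_integral_Ioo]
  exact MeasureTheory.setIntegral_congr_fun measurableSet_Ioo h

lemma II_LL (k : ℕ) : II ((k:ℝ)/2) 1 1 = 2 * LL (k+1) := by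
  unfold II LL
  rw [subst_pow 1, ← intervalIntegral.integral_const_mul]
  refine integral_congr_ioo _ _ ?_
  intro t ht
  have e : (t ^ (1+1)) ^ ((k:ℝ)/2) = t ^ k := by
    rw [← Real.rpow_natCast, ← Real.rpow_mul ht.1.le, ← Real.rpow_natCast]
    congr 1
    push_cast
    ring
  unfold ker
  rw [e, show (1 - t ^ (1+1)) * (1 * t ^ (1+1) + 1) = 1 - t ^ 4 by ring]
  push_cast
  ring

lemma LL4 : 3 * LL 4 = LL 0 := by
  have h : ∫ t in (0:ℝ)..1, (t ^ 0 / Real.sqrt (1 - t ^ 4) - 3 * (t ^ 4 / Real.sqrt (1 - t ^ 4)))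
      = (1:ℝ) * √(1 - 1 ^ 4) - 0 * √(1 - 0 ^ 4) := by
    refine intervalIntegral.integral_eq_sub_of_hasDerivAt_of_le
      (f := fun t : ℝ => t * √(1 - t ^ 4)) zero_le_one (by fun_prop) ?_
      ((LL_int 0).sub ((LL_int 4).const_mul 3))
    intro t ht
    have h4 : t ^ 4 < 1 := pow_lt_one₀ ht.1.le ht.2 (by norm_num)
    have hs : 0 < 1 - t ^ 4 := by linarith
    have hd := (hasDerivAt_id t).mul
      ((((hasDerivAt_pow 4 t).const_sub 1)).sqrt hs.ne')
    refine hd.congr_deriv ?_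
    have hq : 0 < √(1 - t ^ 4) := Real.sqrt_pos.2 hs
    have hq2 := Real.sq_sqrt hs.le
    simp only [id]
    field_simp
    push_cast
    rw [hq2]
    ring
  rw [intervalIntegral.integral_sub (LL_int 0) ((LL_int 4).const_mul 3),
    intervalIntegral.integral_const_mul] at h
  unfold LL
  norm_num at h ⊢
  linarith

lemma LL_beta (k : ℕ) : 4 * LL k = ProbabilityTheory.beta (((k:ℝ)+1)/4) (1/2) := by
  rw [ProbabilityTheory.beta_eq_betaIntegralReal _ _ (by positivity) (by norm_num)]
  have : Complex.betaIntegral ((((k:ℝ)+1)/4 : ℝ) : ℂ) ((1/2:ℝ):ℂ) =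
      ((∫ x in (0:ℝ)..1, x ^ (((k:ℝ)+1)/4 - 1) * (1 - x) ^ ((1/2:ℝ) - 1) : ℝ) : ℂ) := by
    rw [Complex.betaIntegral, ← intervalIntegral.integral_ofReal]
    refine intervalIntegral.integral_congr ?_
    intro x hx
    rw [Set.uIcc_of_le zero_le_one] at hx
    have h1 : 0 ≤ 1 - x := by linarith [hx.2]
    beta_reduce
    rw [Complex.ofReal_mul, Complex.ofReal_cpow hx.1, Complex.ofReal_cpow h1]
    push_cast
    rfl
  rw [this, Complex.ofReal_re, subst_pow 3]
  unfold LL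
  rw [← intervalIntegral.integral_const_mul]
  refine integral_congr_ioo _ _ ?_
  intro t ht
  have h4 : t ^ 4 < 1 := pow_lt_one₀ ht.1.le ht.2 (by norm_num)
  have hs : 0 < 1 - t ^ 4 := by linarith
  show _ = ((3+1:ℕ):ℝ) * t ^ 3 * ((t ^ 4) ^ (((k:ℝ)+1)/4 - 1) * (1 - t ^ 4) ^ ((1/2:ℝ) - 1))
  have e1 : (1 - t ^ 4) ^ ((1/2:ℝ) - 1) = 1 / √(1 - t ^ 4) := by
    rw [show (1/2:ℝ) - 1 = -(1/2) by norm_num, Real.rpow_neg hs.le, ← Real.sqrt_eq_rpow, one_div]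
  have e2 : t ^ 3 * (t ^ 4) ^ (((k:ℝ)+1)/4 - 1) = t ^ k := by
    rw [← Real.rpow_natCast t 4, ← Real.rpow_mul ht.1.le, ← Real.rpow_natCast t 3,
      ← Real.rpow_add ht.1, ← Real.rpow_natCast]
    congr 1
    push_cast
    ring
  rw [e1, ← e2]
  push_cast
  ring

lemma LL_prod : LL 0 * LL 2 = π / 4 := by
  have h0 := LL_beta 0
  have h2 := LL_beta 2
  unfold ProbabilityTheory.beta at h0 h2
  norm_num at h0 h2
  have g5 : Real.Gamma (5/4) = 1/4 * Real.Gamma (1/4) := by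
    rw [← Real.Gamma_add_one (by norm_num)]; norm_num
  have g1 : 0 < Real.Gamma (1/4) := Real.Gamma_pos_of_pos (by norm_num)
  have g3 : 0 < Real.Gamma (3/4) := Real.Gamma_pos_of_pos (by norm_num)
  have gh := Real.Gamma_one_half_eq
  have hp := Real.sq_sqrt Real.pi_pos.le
  rw [gh] at h0 h2
  rw [g5] at h2
  have : (4 * LL 0) * (4 * LL 2) = 4 * π := by
    rw [h0, h2, ← hp]
    field_simp
    try rw [Real.sq_sqrt (by positivity)]
  linarith

lemma varpi_LL : varpi = 2 * LL 0 := by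
  unfold varpi LL
  simp

/-- For `μ > 1`, `γ = (1+√μ)/(μ−1)` and `x > 0` the unique solution of `F(γ,x)=2`,
the orbits intersect, i.e. `σ⁺(γ,x)/2 ≥ γ+1`, iff `μ ≥ (3π/(3π−ϖ²))²`. -/
theorem statement_1 (μ γ x : ℝ) (hμ : 1 < μ) (hγ : γ = (1 + Real.sqrt μ) / (μ - 1))
    (hx : 0 < x) (hFx : F γ x = 2) :
    sigmaPlus γ x / 2 ≥ γ + 1 ↔ μ ≥ (3 * π / (3 * π - varpi ^ 2)) ^ 2 := by
  -- the lemniscatic facts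
  have hd1 : II (1/2) 1 1 = 2 * LL 2 := by simpa using II_LL 1
  have hn1 : II (3/2) 1 1 = 2 * LL 4 := by simpa using II_LL 3
  have hL0 : 0 < LL 0 := by
    have := II_pos (3/2) 1 1 (by norm_num) (by norm_num) (by norm_num)
    linarith [LL4]
  have hnd : LL 4 < LL 2 := by
    refine lt_of_ioo _ _ (LL_int 4) (LL_int 2) ?_
    intro t ht
    have h4 : t ^ 4 < 1 := pow_lt_one₀ ht.1.le ht.2 (by norm_num)
    have hs : 0 < √(1 - t ^ 4) := Real.sqrt_pos.2 (by linarith)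
    have : t ^ 4 < t ^ 2 := pow_lt_pow_right_of_lt_one₀ ht.1 ht.2 (by norm_num)
    gcongr
  have hprod := LL_prod
  have h43 := LL4
  have hv : varpi ^ 2 = 4 * LL 0 ^ 2 := by rw [varpi_LL]; ring
  have hpi : 3 * π = 12 * LL 0 * LL 2 := by linarith
  -- γ
  obtain ⟨m, hm⟩ : ∃ m, m = √μ := ⟨_, rfl⟩
  have hm1 : 1 < m := by rw [hm]; exact Real.lt_sqrt_of_sq_lt (by linarith)
  have hm2 : μ = m ^ 2 := by rw [hm, Real.sq_sqrt (by linarith)]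
  obtain ⟨c, hc⟩ : ∃ c, c = γ + 1 := ⟨_, rfl⟩
  have hcm : c * (m - 1) = m := by
    rw [hc, hγ, ← hm, hm2]
    have h1 : m ^ 2 - 1 ≠ 0 := by nlinarith
    field_simp
    ring
  have hc0 : 0 < c := by
    by_contra h
    nlinarith
  -- a, b
  obtain ⟨a, ha⟩ : ∃ a, a = sigmaPlus γ x := ⟨_, rfl⟩
  obtain ⟨b, hb⟩ : ∃ b, b = - sigmaMinus γ x := ⟨_, rfl⟩
  have hsq := Real.sq_sqrt (show 0 ≤ (2 - γ ^ 2 * x) ^ 2 + 4 * (γ + 1) ^ 2 by positivity)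
  have hlt : |2 - γ ^ 2 * x| < √((2 - γ ^ 2 * x) ^ 2 + 4 * (γ + 1) ^ 2) := by
    rw [← Real.sqrt_sq_eq_abs]
    apply Real.sqrt_lt_sqrt (by positivity)
    rw [← hc]
    have := pow_pos hc0 2
    linarith
  obtain ⟨hlt1, hlt2⟩ := abs_lt.1 hlt
  have ha0 : 0 < a := by rw [ha]; unfold sigmaPlus; linarith
  have hb0 : 0 < b := by rw [hb]; unfold sigmaMinus; linarith
  have hab : a * b = (2 * c) ^ 2 := by
    rw [ha, hb, hc]; unfold sigmaPlus sigmaMinus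
    linear_combination hsq
  have hF : a * II (3/2) a b = 2 * II (1/2) a b := by
    have hD := II_pos (1/2) a b (by norm_num) ha0.le hb0
    have : F γ x = a * II (3/2) a b / II (1/2) a b := by
      unfold F II ker
      rw [hb, ← ha]
      simp only [sub_eq_add_neg]
    rw [this, div_eq_iff hD.ne'] at hFx
    exact hFx
  have hn := II_scale (3/2) 1 (b/a) a ha0
  have hd := II_scale (1/2) (a/b) 1 b hb0
  rw [mul_one, mul_div_cancel₀ _ ha0.ne'] at hn
  rw [mul_one, mul_div_cancel₀ _ hb0.ne'] at hd
  have hkey : c * II (3/2) 1 (b/a) = II (1/2) (a/b) 1 := by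
    rw [hn, hd] at hF
    have hsa : 0 < √a := Real.sqrt_pos.2 ha0
    have hsb : 0 < √b := Real.sqrt_pos.2 hb0
    have hsa2 := Real.sq_sqrt ha0.le
    have hsab : √a * √b = 2 * c := by
      rw [← Real.sqrt_mul ha0.le, hab, Real.sqrt_sq (by linarith)]
    have h1 : a * (II (3/2) 1 (b/a) / √a) = √a * II (3/2) 1 (b/a) := by
      nth_rw 1 [← hsa2]
      field_simp
    rw [h1, ← mul_div_assoc, eq_div_iff hsb.ne'] at hF
    have : √a * √b * II (3/2) 1 (b/a) = 2 * II (1/2) (a/b) 1 := by linarith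
    rw [hsab] at this
    linarith
  -- left side
  have hleft : a / 2 ≥ c ↔ b ≤ a := by
    constructor
    · intro h
      by_contra h'
      push Not at h'
      have h3 : (2 * c) ^ 2 < (2 * c) ^ 2 := by
        nlinarith only [hab, h, h', hc0, ha0]
      exact lt_irrefl _ h3
    · intro h
      by_contra h'
      push Not at h'
      have h3 : (2 * c) ^ 2 < (2 * c) ^ 2 := by
        nlinarith only [hab, h, h', hc0, ha0]
      exact lt_irrefl _ h3
  have hmid : b ≤ a ↔ c * LL 4 ≤ LL 2 := by
    constructor
    · intro h
      rcases h.eq_or_lt with h | h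
      · rw [h, div_self ha0.ne', hn1, hd1] at hkey
        linarith
      · have h1 := II_lt (3/2) 1 (b/a) 1 1 (by norm_num) (by norm_num) (by positivity) le_rfl
          ((div_lt_one ha0).2 h).le (Or.inr ((div_lt_one ha0).2 h))
        have h2 := II_lt (1/2) 1 1 (a/b) 1 (by norm_num) (by norm_num) (by norm_num)
          ((one_lt_div hb0).2 h).le le_rfl (Or.inl ((one_lt_div hb0).2 h))
        rw [hn1] at h1
        rw [hd1] at h2
        have h3 := mul_lt_mul_of_pos_left h1 hc0
        linarith only [h2, h3, hkey]
    · intro h'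
      by_contra h
      push Not at h
      have h1 := II_lt (3/2) 1 1 1 (b/a) (by norm_num) (by norm_num) (by norm_num) le_rfl
          ((one_lt_div ha0).2 h).le (Or.inr ((one_lt_div ha0).2 h))
      have h2 := II_lt (1/2) (a/b) 1 1 1 (by norm_num) (by positivity) (by norm_num)
          ((div_lt_one hb0).2 h).le le_rfl (Or.inl ((div_lt_one hb0).2 h))
      rw [hn1] at h1
      rw [hd1] at h2
      have h3 := mul_lt_mul_of_pos_left h1 hc0
      linarith only [h2, h3, hkey, h']
  rw [← ha, ← hc, hleft, hmid]
  -- right side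
  have hq : 3 * π / (3 * π - varpi ^ 2) = LL 2 / (LL 2 - LL 4) := by
    rw [hpi, hv, ← h43]
    have : LL 2 - LL 4 ≠ 0 := by linarith
    have h4 : LL 4 ≠ 0 := by
      intro h; rw [h] at h43; linarith
    rw [show 12 * (3 * LL 4) * LL 2 - 4 * (3 * LL 4) ^ 2 = 36 * LL 4 * (LL 2 - LL 4) by ring,
      show 12 * (3 * LL 4) * LL 2 = 36 * LL 4 * LL 2 by ring]
    exact mul_div_mul_left _ _ (mul_ne_zero (by norm_num) h4)
  have hL2 : 0 < LL 2 := by linarith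
  have hsub : 0 < LL 2 - LL 4 := by linarith
  rw [hq, hm2, ge_iff_le, pow_le_pow_iff_left₀ (by positivity) (by linarith) (by norm_num),
    div_le_iff₀ hsub, ← hcm]
  have hm0 : 0 < m - 1 := by linarith
  have e : c * (m - 1) * (LL 2 - LL 4) - LL 2 = (m - 1) * (LL 2 - c * LL 4) := by
    have : m * (LL 2) = c * (m-1) * LL 2 := by rw [hcm]
    linear_combination -this
  constructor
  · intro h
    have := mul_nonneg hm0.le (sub_nonneg.2 h)
    linarith
  · intro h
    by_contra h'
    push Not at h'
    have := mul_neg_of_pos_of_neg hm0 (sub_neg.2 h')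
    linarith
end

section
/- Let μ > 0, η > 0 and let m ∈ ℝ. Suppose q₂ : ℝ → ℝ is a smooth 1-periodic function with q₂(t) > 0 for all t, whose mean q̄₂ = ∫₀¹ q₂(t) dt satisfies q̄₂ > m > 0, and which satisfies the second-order delay equation q₂''(t) = −μη²/q₂(t)² + η²/(q̄₂ − m)² for all t ∈ ℝ. Then q₂ is constant. -/
open Real intervalIntegral

lemma dd_nonpos_of_max (f : ℝ → ℝ) (hf : Continuous f) (a : ℝ) (h : ∀ t, f t ≤ f a) :
    deriv (deriv f) a ≤ 0 := by
  by_contra! hc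
  have hmax : IsLocalMax f a := Filter.Eventually.of_forall h
  have hmin : IsLocalMin f a :=
    isLocalMin_of_deriv_deriv_pos hc hmax.deriv_eq_zero hf.continuousAt
  have he : f =ᶠ[nhds a] fun _ => f a := by
    filter_upwards [hmin] with t ht
    exact le_antisymm (h t) ht
  have h2 := he.deriv.deriv_eq
  simp at h2
  linarith

/-- If a smooth positive `1`-periodic function `q₂` with mean `q̄₂ > m > 0` satisfies the
delay equation `q₂'' = −μη²/q₂² + η²/(q̄₂−m)²`, then `q₂` is constant. -/
theorem statement_2 (μ η m : ℝ) (hμ : 0 < μ) (hη : 0 < η) (hm : 0 < m)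
    (q₂ : ℝ → ℝ) (hsmooth : ContDiff ℝ (⊤ : ℕ∞) q₂)
    (hper : ∀ t : ℝ, q₂ (t + 1) = q₂ t)
    (hpos : ∀ t : ℝ, 0 < q₂ t)
    (hmean : m < ∫ t in (0:ℝ)..1, q₂ t)
    (hODE : ∀ t : ℝ, deriv (deriv q₂) t =
      -(μ * η ^ 2) / (q₂ t) ^ 2 + η ^ 2 / ((∫ s in (0:ℝ)..1, q₂ s) - m) ^ 2) :
    ∀ s t : ℝ, q₂ s = q₂ t := by
  have hc : Continuous q₂ := hsmooth.continuous
  obtain ⟨a, -, ha⟩ := isCompact_Icc.exists_isMaxOn (s := Set.Icc (0:ℝ) 1) ⟨0, by simp⟩ hc.continuousOn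
  obtain ⟨b, -, hb⟩ := isCompact_Icc.exists_isMinOn (s := Set.Icc (0:ℝ) 1) ⟨0, by simp⟩ hc.continuousOn
  have hp : Function.Periodic q₂ 1 := hper
  have hA : ∀ t, q₂ t ≤ q₂ a := by
    intro t
    obtain ⟨y, hy, e⟩ := hp.exists_mem_Ico₀ one_pos t
    rw [e]
    exact ha ⟨hy.1, hy.2.le⟩
  have hB : ∀ t, q₂ b ≤ q₂ t := by
    intro t
    obtain ⟨y, hy, e⟩ := hp.exists_mem_Ico₀ one_pos t
    rw [e]
    exact hb ⟨hy.1, hy.2.le⟩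
  have h1 := dd_nonpos_of_max q₂ hc a hA
  have h2 := dd_nonpos_of_max (fun t => - q₂ t) hc.neg b (fun t => neg_le_neg (hB t))
  have e : deriv (fun t => - q₂ t) = fun t => - deriv q₂ t := by
    funext t
    exact deriv.fun_neg
  rw [e, deriv.fun_neg, hODE] at h2
  rw [hODE] at h1
  have h3 : (μ * η ^ 2) / (q₂ b) ^ 2 ≤ (μ * η ^ 2) / (q₂ a) ^ 2 := by
    rw [neg_div] at h1 h2
    linarith
  have h4 : q₂ a ≤ q₂ b := by
    have hk : 0 < μ * η ^ 2 := by positivity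
    have := hpos a
    have := hpos b
    rw [div_le_div_iff_of_pos_left hk (by positivity) (by positivity)] at h3
    exact (pow_le_pow_iff_left₀ (by positivity) (by positivity) two_ne_zero).1 h3
  intro s t
  linarith [hA s, hA t, hB s, hB t]
end

section
/- For every γ > 0, the function x ↦ F(γ, x) is strictly monotone decreasing on (0, ∞). -/
open Real intervalIntegral

lemma aux_int (p a b : ℝ) (hp : 0 ≤ p) (ha : 0 < a) (hb : 0 < b) :
    IntervalIntegrable (fun r : ℝ => r ^ p / Real.sqrt ((1 - r) * (a * r + b)))
      MeasureTheory.volume 0 1 := by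
  have h1 : IntervalIntegrable (fun r : ℝ => (1 - r) ^ (-(1/2) : ℝ))
      MeasureTheory.volume 0 1 := by
    have h := (intervalIntegrable_rpow' (a := 0) (b := 1)
      (r := (-(1/2) : ℝ)) (by norm_num)).comp_sub_left 1
    simpa using h.symm
  have h2 : ContinuousOn (fun r : ℝ => r ^ p / Real.sqrt (a * r + b)) (Set.uIcc 0 1) := by
    apply ContinuousOn.div
    · exact (Real.continuous_rpow_const hp).continuousOn
    · fun_prop
    · intro r hr
      rw [Set.uIcc_of_le zero_le_one] at hr
      have := mul_nonneg ha.le hr.1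
      exact (Real.sqrt_pos.2 (by linarith)).ne'
  refine (h1.mul_continuousOn h2).congr ?_
  intro r hr
  rw [Set.uIoc_of_le zero_le_one] at hr
  have h0 : 0 ≤ 1 - r := by linarith [hr.2]
  simp only
  rw [Real.sqrt_mul h0, Real.rpow_neg h0, ← Real.sqrt_eq_rpow]
  field_simp

lemma aux_pos (p a b : ℝ) (hp : 0 ≤ p) (ha : 0 < a) (hb : 0 < b) :
    0 < ∫ r in (0:ℝ)..1, r ^ p / Real.sqrt ((1 - r) * (a * r + b)) := by
  refine intervalIntegral_pos_of_pos_on (aux_int p a b hp ha hb) ?_ one_pos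
  intro r hr
  have h1 : 0 < 1 - r := by linarith [hr.2]
  have := mul_pos ha hr.1
  have := Real.rpow_pos_of_pos hr.1 p
  have : 0 < Real.sqrt ((1 - r) * (a * r + b)) := Real.sqrt_pos.2 (by positivity)
  positivity

/-- comparison with weights `u`, `v` -/
lemma aux_lt (p a b a' b' u v : ℝ) (hp : 0 ≤ p) (ha : 0 < a) (hb : 0 < b)
    (ha' : 0 < a') (hb' : 0 < b') (hu : 0 < u)
    (h : ∀ r ∈ Set.Ioo (0:ℝ) 1, u * (a' * r + b') < v * (a * r + b)) :
    Real.sqrt u * (∫ r in (0:ℝ)..1, r ^ p / Real.sqrt ((1 - r) * (a * r + b))) <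
    Real.sqrt v * (∫ r in (0:ℝ)..1, r ^ p / Real.sqrt ((1 - r) * (a' * r + b'))) := by
  have i1 := (aux_int p a b hp ha hb).const_mul (Real.sqrt u)
  have i2 := (aux_int p a' b' hp ha' hb').const_mul (Real.sqrt v)
  rw [← sub_pos, ← intervalIntegral.integral_const_mul, ← intervalIntegral.integral_const_mul,
    ← intervalIntegral.integral_sub i2 i1]
  refine intervalIntegral_pos_of_pos_on (i2.sub i1) ?_ one_pos
  intro r hr
  have h1 : 0 < 1 - r := by linarith [hr.2]
  have h2 := mul_pos ha hr.1
  have h3 := mul_pos ha' hr.1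
  have h4 := Real.rpow_pos_of_pos hr.1 p
  have h5 : 0 < Real.sqrt ((1 - r) * (a * r + b)) := Real.sqrt_pos.2 (by positivity)
  have h6 : 0 < Real.sqrt ((1 - r) * (a' * r + b')) := Real.sqrt_pos.2 (by positivity)
  rw [sub_pos, ← mul_div_assoc, ← mul_div_assoc, div_lt_div_iff₀ h5 h6]
  have h7 : Real.sqrt u * Real.sqrt ((1 - r) * (a' * r + b')) <
      Real.sqrt v * Real.sqrt ((1 - r) * (a * r + b)) := by
    rw [← Real.sqrt_mul hu.le, ← Real.sqrt_mul' _ (by positivity)]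
    apply Real.sqrt_lt_sqrt (by positivity)
    nlinarith [h r hr]
  nlinarith

lemma aux_main (a b a' b' : ℝ) (ha : 0 < a) (hb : 0 < b) (ha' : 0 < a') (hb' : 0 < b')
    (hab : a * b = a' * b') (h : a' < a) (h' : b < b') :
    a' * (∫ r in (0:ℝ)..1, r ^ ((3:ℝ)/2) / Real.sqrt ((1 - r) * (a' * r + b'))) /
      (∫ r in (0:ℝ)..1, r ^ ((1:ℝ)/2) / Real.sqrt ((1 - r) * (a' * r + b'))) <
    a * (∫ r in (0:ℝ)..1, r ^ ((3:ℝ)/2) / Real.sqrt ((1 - r) * (a * r + b))) /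
      (∫ r in (0:ℝ)..1, r ^ ((1:ℝ)/2) / Real.sqrt ((1 - r) * (a * r + b))) := by
  have k : a' * b < a * b' := mul_lt_mul'' h h' ha'.le hb.le
  have N := aux_lt (3/2) a' b' a b a' a (by norm_num) ha' hb' ha hb ha'
    (fun r hr => by nlinarith)
  have D := aux_lt (1/2) a b a' b' b b' (by norm_num) ha hb ha' hb' hb
    (fun r hr => by nlinarith [mul_pos (sub_pos.2 k) hr.1])
  have pN := aux_pos (3/2) a b (by norm_num) ha hb
  have pN' := aux_pos (3/2) a' b' (by norm_num) ha' hb'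
  have pD := aux_pos (1/2) a b (by norm_num) ha hb
  have pD' := aux_pos (1/2) a' b' (by norm_num) ha' hb'
  rw [div_lt_div_iff₀ pD' pD]
  generalize (∫ r in (0:ℝ)..1, r ^ ((3:ℝ)/2) / Real.sqrt ((1 - r) * (a' * r + b'))) = N2 at *
  generalize (∫ r in (0:ℝ)..1, r ^ ((1:ℝ)/2) / Real.sqrt ((1 - r) * (a' * r + b'))) = D2 at *
  generalize (∫ r in (0:ℝ)..1, r ^ ((3:ℝ)/2) / Real.sqrt ((1 - r) * (a * r + b))) = N1 at *
  generalize (∫ r in (0:ℝ)..1, r ^ ((1:ℝ)/2) / Real.sqrt ((1 - r) * (a * r + b))) = D1 at *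
  have P := mul_lt_mul'' N D (by positivity) (by positivity)
  have sa := Real.sqrt_pos.2 ha
  have sb := Real.sqrt_pos.2 hb
  have sa' := Real.sqrt_pos.2 ha'
  have sb' := Real.sqrt_pos.2 hb'
  have e : √a * √b = √a' * √b' := by
    rw [← Real.sqrt_mul ha.le, ← Real.sqrt_mul ha'.le, hab]
  have qa := Real.mul_self_sqrt ha.le
  have qa' := Real.mul_self_sqrt ha'.le
  have P2 := mul_lt_mul_of_pos_left P (mul_pos sa sa')
  have e1 : √a * √a' * (√a' * N2 * (√b * D1)) = (√a * √b) * (a' * N2 * D1) := by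
    rw [← qa']; simp only [Real.sqrt_mul_self sa'.le]; ring
  have e2 : √a * √a' * (√a * N1 * (√b' * D2)) = (√a * √b) * (a * N1 * D2) := by
    rw [e, ← qa]; simp only [Real.sqrt_mul_self sa.le]; ring
  rw [e1, e2] at P2
  exact lt_of_mul_lt_mul_left P2 (by positivity)

lemma aux_sq (c t : ℝ) (hc : 0 < c) : |t| < √(t ^ 2 + c) := by
  rw [← Real.sqrt_sq_eq_abs]
  exact Real.sqrt_lt_sqrt (sq_nonneg t) (by linarith)

lemma aux_mono (c s t : ℝ) (hc : 0 < c) (h : s < t) :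
    s + √(s ^ 2 + c) < t + √(t ^ 2 + c) := by
  have h1 := (abs_lt.1 (aux_sq c s hc))
  have h2 := (abs_lt.1 (aux_sq c t hc))
  have q1 := Real.mul_self_sqrt (show 0 ≤ s ^ 2 + c by positivity)
  have q2 := Real.mul_self_sqrt (show 0 ≤ t ^ 2 + c by positivity)
  by_contra hh
  push Not at hh
  nlinarith

/-- For every `γ > 0` the function `x ↦ F(γ,x)` is strictly monotone decreasing on `(0,∞)`. -/
theorem statement_3 (γ : ℝ) (hγ : 0 < γ) :
    StrictAntiOn (fun x => F γ x) (Set.Ioi (0:ℝ)) := by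
  intro x hx y hy hxy
  have hc : 0 < 4 * (γ + 1) ^ 2 := by positivity
  have hst : 2 - γ ^ 2 * y < 2 - γ ^ 2 * x := by
    have : 0 < γ ^ 2 := by positivity
    nlinarith
  simp only [F, sigmaPlus, sigmaMinus]
  generalize 4 * (γ + 1) ^ 2 = c at *
  generalize 2 - γ ^ 2 * x = t at *
  generalize 2 - γ ^ 2 * y = s at *
  have h1 := (abs_lt.1 (aux_sq c s hc))
  have h2 := (abs_lt.1 (aux_sq c t hc))
  have q1 := Real.mul_self_sqrt (show 0 ≤ s ^ 2 + c by positivity)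
  have q2 := Real.mul_self_sqrt (show 0 ≤ t ^ 2 + c by positivity)
  have m1 := aux_mono c s t hc hst
  have m2 := aux_mono c (-t) (-s) hc (by linarith)
  rw [neg_sq, neg_sq] at m2
  have := aux_main (t + √(t ^ 2 + c)) (-(t - √(t ^ 2 + c))) (s + √(s ^ 2 + c))
    (-(s - √(s ^ 2 + c))) (by linarith) (by linarith) (by linarith) (by linarith)
    (by nlinarith) m1 (by linarith)
  simpa only [← sub_eq_add_neg] using this
end

section
/- For every real γ ≠ 0, the limit of F(γ, x) as x → ∞ is 0. -/
open Real intervalIntegral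

lemma sigmaPlus_nonneg' (γ x : ℝ) : 0 ≤ sigmaPlus γ x := by
  unfold sigmaPlus
  have h : |2 - γ ^ 2 * x| ≤ Real.sqrt ((2 - γ ^ 2 * x) ^ 2 + 4 * (γ + 1) ^ 2) := by
    apply Real.abs_le_sqrt
    nlinarith [sq_nonneg (γ + 1)]
  linarith [neg_abs_le (2 - γ ^ 2 * x)]

lemma F_bounds (γ x : ℝ) : 0 ≤ F γ x ∧ F γ x ≤ sigmaPlus γ x := by
  have hs := sigmaPlus_nonneg' γ x
  unfold F
  set A := ∫ r in (0:ℝ)..1, r ^ ((3:ℝ)/2) /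
      Real.sqrt ((1 - r) * (sigmaPlus γ x * r - sigmaMinus γ x)) with hA
  set B := ∫ r in (0:ℝ)..1, r ^ ((1:ℝ)/2) /
      Real.sqrt ((1 - r) * (sigmaPlus γ x * r - sigmaMinus γ x)) with hB
  have hA0 : 0 ≤ A := by
    apply intervalIntegral.integral_nonneg zero_le_one
    intro r hr
    exact div_nonneg (Real.rpow_nonneg hr.1 _) (Real.sqrt_nonneg _)
  have hB0 : 0 ≤ B := by
    apply intervalIntegral.integral_nonneg zero_le_one
    intro r hr
    exact div_nonneg (Real.rpow_nonneg hr.1 _) (Real.sqrt_nonneg _)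
  refine ⟨div_nonneg (mul_nonneg hs hA0) hB0, ?_⟩
  by_cases hi : IntervalIntegrable (fun r : ℝ => r ^ ((1:ℝ)/2) /
      Real.sqrt ((1 - r) * (sigmaPlus γ x * r - sigmaMinus γ x))) MeasureTheory.volume 0 1
  · have hAB : A ≤ B := by
      rw [hA, hB, intervalIntegral.integral_of_le zero_le_one,
        intervalIntegral.integral_of_le zero_le_one]
      apply MeasureTheory.integral_mono_of_nonneg
      · refine (MeasureTheory.ae_restrict_iff' measurableSet_Ioc).2 (Filter.Eventually.of_forall ?_)
        intro r hr
        exact div_nonneg (Real.rpow_nonneg hr.1.le _) (Real.sqrt_nonneg _)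
      · exact (intervalIntegrable_iff_integrableOn_Ioc_of_le zero_le_one).1 hi
      · refine (MeasureTheory.ae_restrict_iff' measurableSet_Ioc).2 (Filter.Eventually.of_forall ?_)
        intro r hr
        exact div_le_div_of_nonneg_right
          (Real.rpow_le_rpow_of_exponent_ge hr.1 hr.2 (by norm_num)) (Real.sqrt_nonneg _)
    rw [mul_div_assoc]
    exact mul_le_of_le_one_right hs (div_le_one_of_le₀ hAB hB0)
  · have : B = 0 := intervalIntegral.integral_undef hi
    rw [this, div_zero]
    exact hs

/-- For every `γ ≠ 0` we have `lim_{x→∞} F(γ,x) = 0`. -/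
theorem statement_6 (γ : ℝ) (hγ : γ ≠ 0) :
    Filter.Tendsto (fun x => F γ x) Filter.atTop (nhds 0) := by
  have hg : 0 < γ ^ 2 := by positivity
  have ha : Filter.Tendsto (fun x : ℝ => γ ^ 2 * x - 2) Filter.atTop Filter.atTop :=
    Filter.tendsto_atTop_add_const_right _ (-2) (Filter.tendsto_id.const_mul_atTop hg)
  have hlim : Filter.Tendsto (fun x : ℝ => 2 * (γ + 1) ^ 2 / (γ ^ 2 * x - 2))
      Filter.atTop (nhds 0) := ha.const_div_atTop _
  refine tendsto_of_tendsto_of_tendsto_of_le_of_le' tendsto_const_nhds hlim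
    (Filter.Eventually.of_forall fun x => (F_bounds γ x).1) ?_
  filter_upwards [ha.eventually_gt_atTop 0] with x hx
  refine (F_bounds γ x).2.trans ?_
  unfold sigmaPlus
  set a := γ ^ 2 * x - 2 with hadef
  have h2 : 2 - γ ^ 2 * x = -a := by rw [hadef]; ring
  rw [h2]
  have hd : 0 ≤ 2 * (γ + 1) ^ 2 / a := by positivity
  have : Real.sqrt ((-a) ^ 2 + 4 * (γ + 1) ^ 2) ≤ a + 2 * (γ + 1) ^ 2 / a := by
    apply Real.sqrt_le_iff.2 ⟨by positivity, ?_⟩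
    have h3 : 2 * (γ + 1) ^ 2 / a * a = 2 * (γ + 1) ^ 2 := div_mul_cancel₀ _ hx.ne'
    nlinarith [sq_nonneg (2 * (γ + 1) ^ 2 / a)]
  linarith
end

section
/- Let γ > 0, q̄₁ > 0 and κ ∈ ℝ. Define q₁^max = (γ²κq̄₁² + √(γ⁴κ²q̄₁⁴ + 4(γ+1)²q̄₁²))/2 and q̄₂ = (γ+1)q̄₁. Then: q₁^max = q̄₂ if and only if κ = 0; q₁^max > q̄₂ if and only if κ > 0; and q₁^max < q̄₂ if and only if κ < 0. (Physically: the orbits of the inner and outer electron touch, intersect, or are disjoint according to the sign of the energy constant κ.) -/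
open Real intervalIntegral

/-- With `q₁^max = (γ²κq̄₁² + √(γ⁴κ²q̄₁⁴ + 4(γ+1)²q̄₁²))/2` and `q̄₂ = (γ+1)q̄₁`, the
orbits touch, intersect, or are disjoint according to the sign of `κ`. -/
theorem statement_7 (γ qbar₁ κ : ℝ) (hγ : 0 < γ) (hq : 0 < qbar₁) :
    ((γ ^ 2 * κ * qbar₁ ^ 2 +
        Real.sqrt (γ ^ 4 * κ ^ 2 * qbar₁ ^ 4 + 4 * (γ + 1) ^ 2 * qbar₁ ^ 2)) / 2
        = (γ + 1) * qbar₁ ↔ κ = 0) ∧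
    ((γ ^ 2 * κ * qbar₁ ^ 2 +
        Real.sqrt (γ ^ 4 * κ ^ 2 * qbar₁ ^ 4 + 4 * (γ + 1) ^ 2 * qbar₁ ^ 2)) / 2
        > (γ + 1) * qbar₁ ↔ 0 < κ) ∧
    ((γ ^ 2 * κ * qbar₁ ^ 2 +
        Real.sqrt (γ ^ 4 * κ ^ 2 * qbar₁ ^ 4 + 4 * (γ + 1) ^ 2 * qbar₁ ^ 2)) / 2
        < (γ + 1) * qbar₁ ↔ κ < 0) := by
  have hb : 0 < (γ + 1) * qbar₁ := by positivity
  have hc : 0 < γ ^ 2 * qbar₁ ^ 2 := by positivity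
  have e1 : γ ^ 4 * κ ^ 2 * qbar₁ ^ 4 + 4 * (γ + 1) ^ 2 * qbar₁ ^ 2
      = (γ ^ 2 * qbar₁ ^ 2 * κ) ^ 2 + (2 * ((γ + 1) * qbar₁)) ^ 2 := by ring
  have e2 : γ ^ 2 * κ * qbar₁ ^ 2 = γ ^ 2 * qbar₁ ^ 2 * κ := by ring
  rw [e1, e2]
  generalize (γ + 1) * qbar₁ = b at *
  generalize γ ^ 2 * qbar₁ ^ 2 = c at *
  rcases lt_trichotomy κ 0 with h | h | h
  · have ha : c * κ < 0 := mul_neg_of_pos_of_neg hc h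
    have hs : Real.sqrt ((c * κ) ^ 2 + (2 * b) ^ 2) < 2 * b - c * κ := by
      rw [Real.sqrt_lt' (by linarith)]
      nlinarith [mul_neg_of_pos_of_neg hb ha]
    have hl : (c * κ + Real.sqrt ((c * κ) ^ 2 + (2 * b) ^ 2)) / 2 < b := by linarith
    exact ⟨iff_of_false hl.ne h.ne, iff_of_false hl.not_gt h.not_gt, iff_of_true hl h⟩
  · subst h
    have hs : Real.sqrt ((c * 0) ^ 2 + (2 * b) ^ 2) = 2 * b := by
      rw [show (c * 0) ^ 2 + (2 * b) ^ 2 = (2 * b) ^ 2 by ring]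
      exact Real.sqrt_sq (by linarith)
    rw [hs]
    have hl : (c * 0 + 2 * b) / 2 = b := by ring
    rw [hl]
    simp
  · have ha : 0 < c * κ := mul_pos hc h
    have hs : 2 * b ≤ Real.sqrt ((c * κ) ^ 2 + (2 * b) ^ 2) := by
      apply Real.le_sqrt_of_sq_le
      nlinarith [sq_nonneg (c * κ)]
    have hl : b < (c * κ + Real.sqrt ((c * κ) ^ 2 + (2 * b) ^ 2)) / 2 := by linarith
    exact ⟨iff_of_false hl.ne' h.ne', iff_of_true hl h, iff_of_false hl.not_gt h.not_gt⟩
end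

section
/- For γ > 0, the equality F(γ, 2/γ²) = 2 holds if and only if γ = (3π − ϖ²)/ϖ², where ϖ = 2∫₀¹ dt/√(1−t⁴) is the lemniscatic constant. (Physically: the energy constant κ = 2/(γ²q̄₁) − 1 of the unique periodic orbit vanishes exactly for this value of γ.) -/
open Real intervalIntegral

open MeasureTheory in
lemma betaInt (a b : ℝ) (ha : 0 < a) (hb : 0 < b) :
    ∫ x in (0:ℝ)..1, x ^ (a - 1) * (1 - x) ^ (b - 1) = ProbabilityTheory.beta a b := by
  rw [ProbabilityTheory.beta_eq_betaIntegralReal a b ha hb, Complex.betaIntegral,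
    ← Complex.ofReal_re (∫ x in (0:ℝ)..1, x ^ (a - 1) * (1 - x) ^ (b - 1)),
    ← intervalIntegral.integral_ofReal]
  congr 1
  apply intervalIntegral.integral_congr
  intro x hx
  rw [Set.uIcc_of_le zero_le_one] at hx
  have h1 : 0 ≤ 1 - x := by linarith [hx.2]
  simp only
  rw [Complex.ofReal_mul, Complex.ofReal_cpow hx.1, Complex.ofReal_cpow h1]
  push_cast
  rfl

open MeasureTheory in
lemma keyInt (p s : ℝ) (hp : 0 < p) (hs : 0 < s + 1) :
    ∫ r in (0:ℝ)..1, r ^ s / Real.sqrt (1 - r ^ p) =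
      1 / p * ProbabilityTheory.beta ((s + 1) / p) (1 / 2) := by
  rw [← betaInt _ _ (by positivity) (by norm_num)]
  have h := integral_comp_rpow_Ioi_of_pos (g := Set.indicator (Set.Ioc (0:ℝ) 1)
    (fun y : ℝ => y ^ ((s + 1) / p - 1) * (1 - y) ^ ((1:ℝ) / 2 - 1))) hp
  have hI : Set.Ioi (0:ℝ) ∩ Set.Ioc 0 1 = Set.Ioc 0 1 := by
    ext x; simp
  rw [setIntegral_indicator measurableSet_Ioc, hI] at h
  rw [intervalIntegral.integral_of_le zero_le_one, intervalIntegral.integral_of_le zero_le_one,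
    ← h, ← hI, ← setIntegral_indicator measurableSet_Ioc, hI,
    ← MeasureTheory.integral_const_mul]
  apply setIntegral_congr_fun measurableSet_Ioi
  intro x hx
  have hx : 0 < x := hx
  simp only [Set.indicator_apply, smul_eq_mul]
  by_cases h1 : x ≤ 1
  · have h2 : x ^ p ≤ 1 := Real.rpow_le_one hx.le h1 hp.le
    have h3 : 0 < x ^ p := by positivity
    rw [if_pos ⟨hx, h1⟩, if_pos ⟨h3, h2⟩, show (1:ℝ) / 2 - 1 = -(1 / 2) by norm_num,
      Real.rpow_neg (by linarith), ← Real.sqrt_eq_rpow, ← Real.rpow_mul hx.le]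
    have : x ^ s = x ^ (p - 1) * x ^ (p * ((s + 1) / p - 1)) := by
      rw [← Real.rpow_add hx]
      congr 1
      field_simp
      ring
    rw [this]
    field_simp
  · have h2 : ¬ x ^ p ≤ 1 := not_le.mpr (Real.one_lt_rpow (not_le.mp h1) hp)
    rw [if_neg (fun h => h1 h.2), if_neg (fun h => h2 h.2)]
    simp

lemma varpi_eq : varpi = 1 / 2 * ProbabilityTheory.beta (1 / 4) (1 / 2) := by
  have h := keyInt 4 0 (by norm_num) (by norm_num)
  have h' : ∀ r : ℝ, r ^ (4:ℝ) = r ^ 4 := fun r => by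
    rw [← Real.rpow_natCast]; norm_num
  simp only [Real.rpow_zero, h', zero_add] at h
  rw [varpi, h]
  ring

lemma intScaled (c s : ℝ) (hc : 0 < c) (hs : 0 < s + 1) :
    ∫ r in (0:ℝ)..1, r ^ s / Real.sqrt ((1 - r) * (c * r - -c)) =
      1 / Real.sqrt c * (1 / 2 * ProbabilityTheory.beta ((s + 1) / 2) (1 / 2)) := by
  rw [← keyInt 2 s (by norm_num) hs, ← intervalIntegral.integral_const_mul]
  congr 1
  ext r
  rw [show (1 - r) * (c * r - -c) = c * (1 - r ^ (2:ℝ)) by rw [Real.rpow_two]; ring,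
    Real.sqrt_mul hc.le]
  field_simp

lemma beta_one : ProbabilityTheory.beta (5 / 4) (1 / 2) =
    1 / 3 * ProbabilityTheory.beta (1 / 4) (1 / 2) := by
  have h1 : Real.Gamma (5 / 4) = 1 / 4 * Real.Gamma (1 / 4) := by
    rw [← Real.Gamma_add_one (by norm_num)]; norm_num
  have h2 : Real.Gamma (7 / 4) = 3 / 4 * Real.Gamma (3 / 4) := by
    rw [← Real.Gamma_add_one (by norm_num)]; norm_num
  have h3 : Real.Gamma (3 / 4) ≠ 0 := (Real.Gamma_pos_of_pos (by norm_num)).ne'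
  simp only [ProbabilityTheory.beta]
  rw [show (5:ℝ) / 4 + 1 / 2 = 7 / 4 by norm_num, show (1:ℝ) / 4 + 1 / 2 = 3 / 4 by norm_num,
    h1, h2]
  field_simp

lemma beta_two : ProbabilityTheory.beta (1 / 4) (1 / 2) *
    ProbabilityTheory.beta (3 / 4) (1 / 2) = 4 * π := by
  have h1 : Real.Gamma (5 / 4) = 1 / 4 * Real.Gamma (1 / 4) := by
    rw [← Real.Gamma_add_one (by norm_num)]; norm_num
  have h3 : Real.Gamma (3 / 4) ≠ 0 := (Real.Gamma_pos_of_pos (by norm_num)).ne'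
  have h4 : Real.Gamma (1 / 4) ≠ 0 := (Real.Gamma_pos_of_pos (by norm_num)).ne'
  have h5 := Real.sq_sqrt Real.pi_pos.le
  simp only [ProbabilityTheory.beta]
  rw [show (3:ℝ) / 4 + 1 / 2 = 5 / 4 by norm_num, show (1:ℝ) / 4 + 1 / 2 = 3 / 4 by norm_num,
    h1, Real.Gamma_one_half_eq]
  field_simp
  linarith

/-- For `γ > 0`, `F(γ, 2/γ²) = 2` iff `γ = (3π − ϖ²)/ϖ²`. -/
theorem statement_8 (γ : ℝ) (hγ : 0 < γ) :
    F γ (2 / γ ^ 2) = 2 ↔ γ = (3 * π - varpi ^ 2) / varpi ^ 2 := by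
  have h0 : γ ^ 2 * (2 / γ ^ 2) = 2 := by field_simp
  have hc : 0 < 2 * (γ + 1) := by linarith
  have hsq : Real.sqrt ((2 - (2:ℝ)) ^ 2 + 4 * (γ + 1) ^ 2) = 2 * (γ + 1) := by
    rw [show (2 - (2:ℝ)) ^ 2 + 4 * (γ + 1) ^ 2 = (2 * (γ + 1)) ^ 2 by ring, Real.sqrt_sq hc.le]
  have hp : sigmaPlus γ (2 / γ ^ 2) = 2 * (γ + 1) := by
    rw [sigmaPlus, h0, hsq]; ring
  have hm : sigmaMinus γ (2 / γ ^ 2) = -(2 * (γ + 1)) := by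
    rw [sigmaMinus, h0, hsq]; ring
  have hb : 0 < ProbabilityTheory.beta (1 / 4) (1 / 2) :=
    ProbabilityTheory.beta_pos (by norm_num) (by norm_num)
  have hb3 : 0 < ProbabilityTheory.beta (3 / 4) (1 / 2) :=
    ProbabilityTheory.beta_pos (by norm_num) (by norm_num)
  have h2 := beta_two
  rw [F, hp, hm, intScaled _ _ hc (by norm_num), intScaled _ _ hc (by norm_num),
    show ((3:ℝ) / 2 + 1) / 2 = 5 / 4 by norm_num, show ((1:ℝ) / 2 + 1) / 2 = 3 / 4 by norm_num,
    beta_one, varpi_eq]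
  generalize ProbabilityTheory.beta (1 / 4) (1 / 2) = a at *
  generalize ProbabilityTheory.beta (3 / 4) (1 / 2) = b at *
  have hpi : π = a * b / 4 := by linarith
  have hs : 0 < Real.sqrt (2 * (γ + 1)) := Real.sqrt_pos.mpr hc
  rw [hpi]
  generalize Real.sqrt (2 * (γ + 1)) = t at *
  have e1 : 2 * (γ + 1) * (1 / t * (1 / 2 * (1 / 3 * a))) / (1 / t * (1 / 2 * b)) =
      2 * (γ + 1) * a / (3 * b) := by field_simp
  have e2 : (3 * (a * b / 4) - (1 / 2 * a) ^ 2) / (1 / 2 * a) ^ 2 = (3 * b - a) / a := by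
    field_simp
    ring
  rw [e1, e2, div_eq_iff (by positivity), eq_div_iff hb.ne']
  constructor <;> intro h <;> linarith
end

section
/- For μ > 1, setting γ = (1+√μ)/(μ−1), the equality F(γ, 2/γ²) = 2 holds if and only if μ = (3π/(3π − ϖ²))², where ϖ = 2∫₀¹ dt/√(1−t⁴) is the lemniscatic constant. (Physically: the energy constant κ of the unique periodic orbit vanishes exactly for this charge μ of the nucleus.) -/
open Real intervalIntegral

lemma aux_beta (a b : ℝ) (ha : 0 < a) (hb : 0 < b) :
    ∫ x in Set.Ioo (0:ℝ) 1, x ^ (a - 1) * (1 - x) ^ (b - 1) = ProbabilityTheory.beta a b := by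
  rw [ProbabilityTheory.beta_eq_betaIntegralReal a b ha hb]
  have h : Complex.betaIntegral a b =
      ((∫ x in (0:ℝ)..1, x ^ (a - 1) * (1 - x) ^ (b - 1) : ℝ) : ℂ) := by
    rw [Complex.betaIntegral, ← intervalIntegral.integral_ofReal]
    apply intervalIntegral.integral_congr
    intro x hx
    rw [Set.uIcc_of_le zero_le_one] at hx
    have h1 : 0 ≤ 1 - x := by linarith [hx.2]
    simp only [Complex.ofReal_mul]
    rw [Complex.ofReal_cpow hx.1, Complex.ofReal_cpow h1]
    push_cast
    rfl
  rw [h, Complex.ofReal_re, intervalIntegral.integral_of_le zero_le_one,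
    MeasureTheory.integral_Ioc_eq_integral_Ioo]

lemma aux_int_s9 (p a : ℝ) (hp : 0 < p) (ha : 0 < a) :
    ∫ x in (0:ℝ)..1, x ^ (p * a - 1) / √(1 - x ^ p) = ProbabilityTheory.beta a (1/2) / p := by
  rw [eq_div_iff hp.ne', ← aux_beta a (1/2) ha (by norm_num),
    intervalIntegral.integral_of_le zero_le_one, MeasureTheory.integral_Ioc_eq_integral_Ioo]
  have key := MeasureTheory.integral_comp_rpow_Ioi_of_pos
    (g := (Set.Ioo (0:ℝ) 1).indicator fun x => x ^ (a - 1) * (1 - x) ^ ((1/2:ℝ) - 1)) hp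
  have hsub : Set.Ioo (0:ℝ) 1 ∩ Set.Ioi 0 = Set.Ioo 0 1 :=
    Set.inter_eq_left.2 fun x hx => hx.1
  rw [MeasureTheory.integral_indicator measurableSet_Ioo,
    MeasureTheory.Measure.restrict_restrict measurableSet_Ioo, hsub] at key
  rw [← key, ← MeasureTheory.integral_mul_const]
  conv_lhs => rw [← hsub, ← MeasureTheory.Measure.restrict_restrict measurableSet_Ioo,
    ← MeasureTheory.integral_indicator measurableSet_Ioo]
  apply MeasureTheory.setIntegral_congr_fun measurableSet_Ioi
  intro x hx
  have hx0 : 0 < x := hx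
  by_cases h1 : x < 1
  · have hxp : x ^ p < 1 := Real.rpow_lt_one hx0.le h1 hp
    have hxp0 : 0 < x ^ p := Real.rpow_pos_of_pos hx0 p
    have m1 : x ∈ Set.Ioo (0:ℝ) 1 := ⟨hx0, h1⟩
    have m2 : x ^ p ∈ Set.Ioo (0:ℝ) 1 := ⟨hxp0, hxp⟩
    simp only [Set.indicator_of_mem m1, Set.indicator_of_mem m2, smul_eq_mul]
    have e1 : (1 - x ^ p) ^ ((1/2:ℝ) - 1) = (√(1 - x ^ p))⁻¹ := by
      rw [Real.sqrt_eq_rpow, ← Real.rpow_neg (by linarith)]; norm_num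
    have e2 : x ^ (p * a - 1) = x ^ (p - 1) * (x ^ p) ^ (a - 1) := by
      rw [← Real.rpow_mul hx0.le, ← Real.rpow_add hx0]; ring_nf
    rw [e1, e2]; ring
  · have hxp : 1 ≤ x ^ p := Real.one_le_rpow (not_lt.1 h1) hp.le
    have m1 : x ∉ Set.Ioo (0:ℝ) 1 := fun h => h1 h.2
    have m2 : x ^ p ∉ Set.Ioo (0:ℝ) 1 := fun h => absurd h.2 (not_lt.2 hxp)
    simp only [Set.indicator_of_notMem m1, Set.indicator_of_notMem m2, smul_zero]

lemma aux_A : ∫ r in (0:ℝ)..1, r ^ ((3:ℝ)/2) / √(1 - r ^ 2) =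
    ProbabilityTheory.beta (5/4) (1/2) / 2 := by
  rw [← aux_int_s9 2 (5/4) (by norm_num) (by norm_num)]
  norm_num

lemma aux_B : ∫ r in (0:ℝ)..1, r ^ ((1:ℝ)/2) / √(1 - r ^ 2) =
    ProbabilityTheory.beta (3/4) (1/2) / 2 := by
  rw [← aux_int_s9 2 (3/4) (by norm_num) (by norm_num)]
  norm_num

lemma aux_V : varpi = ProbabilityTheory.beta (1/4) (1/2) / 2 := by
  have h := aux_int_s9 4 (1/4) (by norm_num) (by norm_num)
  have h2 : ∫ t in (0:ℝ)..1, 1 / √(1 - t ^ 4) = ProbabilityTheory.beta (1/4) (1/2) / 4 := by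
    rw [← h]
    apply intervalIntegral.integral_congr
    intro x _
    have : x ^ (4:ℝ) = x ^ 4 := by exact_mod_cast Real.rpow_natCast x 4
    simp [this]
  rw [varpi, h2]; ring

lemma aux_V_pos : 0 < varpi := by
  rw [aux_V]
  have := ProbabilityTheory.beta_pos (α := 1/4) (β := 1/2) (by norm_num) (by norm_num)
  linarith

lemma aux_A2 : ∫ r in (0:ℝ)..1, r ^ ((3:ℝ)/2) / √(1 - r ^ 2) = varpi / 3 := by
  rw [aux_A, aux_V]
  unfold ProbabilityTheory.beta
  have h1 := Real.Gamma_add_one (s := 1/4) (by norm_num)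
  have h2 := Real.Gamma_add_one (s := 3/4) (by norm_num)
  have e3 : (5/4 + 1/2 : ℝ) = 3/4 + 1 := by norm_num
  have e1 : (5/4:ℝ) = 1/4 + 1 := by norm_num
  have e2 : (1/4 + 1/2 : ℝ) = 3/4 := by norm_num
  rw [e3, e2, e1, h1, h2]
  have : Real.Gamma (3/4) ≠ 0 := (Real.Gamma_pos_of_pos (by norm_num)).ne'
  field_simp

lemma aux_B2 : ∫ r in (0:ℝ)..1, r ^ ((1:ℝ)/2) / √(1 - r ^ 2) = π / varpi := by
  rw [eq_div_iff aux_V_pos.ne', aux_B, aux_V]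
  unfold ProbabilityTheory.beta
  have h1 := Real.Gamma_add_one (s := 1/4) (by norm_num)
  have e1 : (3/4 + 1/2 : ℝ) = 1/4 + 1 := by norm_num
  have e2 : (1/4 + 1/2 : ℝ) = 3/4 := by norm_num
  rw [e1, e2, h1, Real.Gamma_one_half_eq]
  have h3 : Real.Gamma (3/4) ≠ 0 := (Real.Gamma_pos_of_pos (by norm_num)).ne'
  have h4 : Real.Gamma (1/4) ≠ 0 := (Real.Gamma_pos_of_pos (by norm_num)).ne'
  field_simp
  rw [Real.sq_sqrt Real.pi_pos.le]
  ring

lemma aux_le : varpi ^ 2 ≤ 3 * π := by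
  have hV := aux_V_pos
  have h : varpi / 3 ≤ π / varpi := by
    rw [← aux_A2, ← aux_B2]
    apply intervalIntegral.integral_mono_on zero_le_one
    · by_contra h
      have := intervalIntegral.integral_undef h
      rw [aux_A2] at this
      linarith
    · by_contra h
      have := intervalIntegral.integral_undef h
      rw [aux_B2] at this
      have := div_pos Real.pi_pos hV
      linarith
    · intro x hx
      rcases eq_or_lt_of_le hx.1 with h0 | h0
      · subst h0; norm_num
      · gcongr ?_ / _
        exact Real.rpow_le_rpow_of_exponent_ge h0 hx.2 (by norm_num)
  rw [div_le_div_iff₀ (by norm_num) hV] at h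
  nlinarith

lemma aux_scale (q c : ℝ) (hc : 0 < c) :
    ∫ r in (0:ℝ)..1, r ^ q / √((1 - r) * (c * r - -c)) =
      (∫ r in (0:ℝ)..1, r ^ q / √(1 - r ^ 2)) / √c := by
  rw [← intervalIntegral.integral_div]
  congr 1
  ext r
  have : (1 - r) * (c * r - -c) = c * (1 - r ^ 2) := by ring
  rw [this, Real.sqrt_mul hc.le, div_div, mul_comm]

/-- For `μ > 1` with `γ = (1+√μ)/(μ−1)`, `F(γ, 2/γ²) = 2` iff `μ = (3π/(3π−ϖ²))²`. -/
theorem statement_9 (μ : ℝ) (hμ : 1 < μ) :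
    F ((1 + Real.sqrt μ) / (μ - 1)) (2 / ((1 + Real.sqrt μ) / (μ - 1)) ^ 2) = 2 ↔
      μ = (3 * π / (3 * π - varpi ^ 2)) ^ 2 := by
  obtain ⟨s, hs, rfl⟩ : ∃ s : ℝ, 1 < s ∧ μ = s ^ 2 :=
    ⟨√μ, by rw [Real.lt_sqrt zero_le_one]; simpa using hμ, (Real.sq_sqrt (by linarith)).symm⟩
  have hs1 : s - 1 ≠ 0 := by linarith
  have hs0 : 0 < s := by linarith
  rw [Real.sqrt_sq hs0.le]
  have hg : (1 + s) / (s ^ 2 - 1) = 1 / (s - 1) := by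
    have : s ^ 2 - 1 = (s - 1) * (1 + s) := by ring
    have : 1 + s ≠ 0 := by linarith
    rw [‹s ^ 2 - 1 = _›]; field_simp
  rw [hg]
  have hc : 0 < 2 * (s / (s - 1)) := by
    have : 0 < s - 1 := by linarith
    positivity
  have e0 : 2 - (1 / (s - 1)) ^ 2 * (2 / (1 / (s - 1)) ^ 2) = 0 := by field_simp; ring
  have e1 : √((0:ℝ) ^ 2 + 4 * (1 / (s - 1) + 1) ^ 2) = 2 * (s / (s - 1)) := by
    rw [← Real.sqrt_sq hc.le]; congr 1; field_simp; ring
  have hp : sigmaPlus (1 / (s - 1)) (2 / (1 / (s - 1)) ^ 2) = 2 * (s / (s - 1)) := by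
    rw [sigmaPlus, e0, e1, zero_add]
  have hm : sigmaMinus (1 / (s - 1)) (2 / (1 / (s - 1)) ^ 2) = -(2 * (s / (s - 1))) := by
    rw [sigmaMinus, e0, e1, zero_sub]
  have hV := aux_V_pos
  have hpi := Real.pi_pos
  have hF : F (1 / (s - 1)) (2 / (1 / (s - 1)) ^ 2) =
      2 * (s * varpi ^ 2) / ((s - 1) * (3 * π)) := by
    rw [F, hp, hm, aux_scale _ _ hc, aux_scale _ _ hc, aux_A2, aux_B2]
    have := (Real.sqrt_pos.2 hc).ne'
    generalize √(2 * (s / (s - 1))) = w at *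
    field_simp
  have hD := aux_le
  rw [hF, div_eq_iff (by positivity)]
  constructor
  · intro h
    have h2 : s * (3 * π - varpi ^ 2) = 3 * π := by linarith
    have hne : 3 * π - varpi ^ 2 ≠ 0 := by
      intro h0; rw [h0] at h2; linarith
    rw [← eq_div_iff hne] at h2
    rw [← h2]
  · intro h
    have hne : 3 * π - varpi ^ 2 ≠ 0 := by
      intro h0; rw [h0] at h; simp at h; linarith
    have h2 : s = 3 * π / (3 * π - varpi ^ 2) := by
      have : 0 ≤ 3 * π - varpi ^ 2 := by linarith
      exact (sq_eq_sq₀ hs0.le (by positivity)).1 h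
    rw [eq_div_iff hne] at h2
    linarith
end

section
/- The lemniscatic constant satisfies ϖ = Γ(1/4)²/√(8π); that is, 2∫₀¹ dt/√(1−t⁴) = Γ(1/4)²/√(8π). -/
open Real intervalIntegral

lemma beta_real_aux : (∫ u in (0:ℝ)..1, u ^ (-(3:ℝ)/4) * (1 - u) ^ (-(1:ℝ)/2)) =
    Real.Gamma (1/4) * Real.Gamma (1/2) / Real.Gamma (3/4) := by
  have h := ProbabilityTheory.beta_eq_betaIntegralReal (1/4) (1/2) (by norm_num) (by norm_num)
  have e : Complex.betaIntegral ((1/4 : ℝ) : ℂ) ((1/2 : ℝ) : ℂ) =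
      ((∫ u in (0:ℝ)..1, u ^ (-(3:ℝ)/4) * (1 - u) ^ (-(1:ℝ)/2) : ℝ) : ℂ) := by
    rw [Complex.betaIntegral, ← intervalIntegral.integral_ofReal]
    apply intervalIntegral.integral_congr
    intro x hx
    rw [Set.uIcc_of_le zero_le_one] at hx
    have h1 : 0 ≤ 1 - x := by linarith [hx.2]
    simp only
    rw [Complex.ofReal_mul, Complex.ofReal_cpow hx.1, Complex.ofReal_cpow h1]
    push_cast
    norm_num
  rw [e, Complex.ofReal_re, ProbabilityTheory.beta] at h
  rw [← h]
  norm_num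

lemma subst_aux : (∫ t in (0:ℝ)..1, 4 * (1 / Real.sqrt (1 - t ^ 4))) =
    ∫ u in (0:ℝ)..1, u ^ (-(3:ℝ)/4) * (1 - u) ^ (-(1:ℝ)/2) := by
  have h := intervalIntegral.integral_comp_mul_deriv_of_deriv_nonneg (a := 0) (b := 1)
    (f := fun t : ℝ => t ^ 4) (f' := fun t : ℝ => 4 * t ^ 3)
    (g := fun u : ℝ => u ^ (-(3:ℝ)/4) * (1 - u) ^ (-(1:ℝ)/2))
    (by fun_prop) (fun x _ => by simpa using hasDerivAt_pow 4 x)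
    (fun x hx => by
      have : 0 < x := by simpa using hx.1
      positivity)
  simp only [one_pow, zero_pow (four_ne_zero : (4:ℕ) ≠ 0)] at h
  rw [← h]
  apply intervalIntegral.integral_congr_ae
  filter_upwards with x hx
  rw [Set.uIoc_of_le zero_le_one] at hx
  have hx0 := hx.1
  have h1 : 0 ≤ 1 - x ^ 4 := by
    have := pow_le_one₀ (n := 4) hx0.le hx.2
    linarith
  have e1 : (x ^ 4) ^ (-(3:ℝ)/4) = (x ^ 3)⁻¹ := by
    rw [← Real.rpow_natCast x 4, ← Real.rpow_mul hx0.le, ← Real.rpow_natCast x 3,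
      ← Real.rpow_neg hx0.le]
    norm_num
  have e2 : (1 - x ^ 4) ^ (-(1:ℝ)/2) = (Real.sqrt (1 - x ^ 4))⁻¹ := by
    rw [Real.sqrt_eq_rpow, ← Real.rpow_neg h1]
    norm_num
  simp only [Function.comp]
  rw [e1, e2]
  field_simp

/-- The lemniscatic constant satisfies `ϖ = Γ(1/4)²/√(8π)`. -/
theorem statement_18 : varpi = Real.Gamma (1/4) ^ 2 / Real.sqrt (8 * π) := by
  have h4 : 4 * (∫ t in (0:ℝ)..1, 1 / Real.sqrt (1 - t ^ 4)) =
      Real.Gamma (1/4) * Real.Gamma (1/2) / Real.Gamma (3/4) := by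
    rw [← beta_real_aux, ← subst_aux, intervalIntegral.integral_const_mul]
  have hr := Real.Gamma_mul_Gamma_one_sub (1/4)
  rw [show π * (1/4) = π / 4 by ring, Real.sin_pi_div_four,
    show (1 - 1/4 : ℝ) = 3/4 by norm_num] at hr
  rw [Real.Gamma_one_half_eq] at h4
  have g3 : 0 < Real.Gamma (3/4) := Real.Gamma_pos_of_pos (by norm_num)
  have g1 : 0 < Real.Gamma (1/4) := Real.Gamma_pos_of_pos (by norm_num)
  have hs : Real.sqrt (8 * π) = 2 * Real.sqrt 2 * Real.sqrt π := by
    rw [show 8 * π = 2 ^ 2 * 2 * π by ring, Real.sqrt_mul (by norm_num),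
      Real.sqrt_mul (by norm_num), Real.sqrt_sq (by norm_num)]
  have hp : 0 < Real.sqrt π := Real.sqrt_pos.2 Real.pi_pos
  have hpp : Real.sqrt π * Real.sqrt π = π := Real.mul_self_sqrt Real.pi_pos.le
  have h2 : 0 < Real.sqrt 2 := by positivity
  have h22 : Real.sqrt 2 * Real.sqrt 2 = 2 := Real.mul_self_sqrt (by norm_num)
  unfold varpi
  rw [hs]
  generalize (∫ t in (0:ℝ)..1, 1 / Real.sqrt (1 - t ^ 4)) = I at *
  rw [eq_div_iff g3.ne'] at h4
  rw [eq_div_iff (by positivity)] at hr ⊢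
  apply mul_right_cancel₀ g3.ne'
  generalize Real.Gamma (1/4) = G at *
  generalize Real.Gamma (3/4) = K at *
  have hr' : G * K = π * Real.sqrt 2 := by
    linear_combination Real.sqrt 2 * hr - G * K / 2 * h22
  linear_combination Real.sqrt 2 * Real.sqrt π * h4 + G * Real.sqrt 2 * hpp - G * hr'
end
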